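/- Let A(t) = c + Σ_{j=1}^k a_j sin((2j−1)t) + Σ_{j=1}^k b_j cos((2j−1)t) be a raked trigonometric polynomial, viewed as a function A : S¹ → ℝ, which is not identically zero. Suppose A has 2k distinct roots in an arc Ω ⊂ S¹ of length less than π. Then every other root of A on S¹ lies in the antipodal arc Ω + π. -/

import Mathlib

open Real

/-- The symmetric moment curve `SM_{2k} : ℝ → ℝ^{2k}`,
`SM_{2k}(t) = (cos t, sin t, cos 3t, sin 3t, …, cos (2k-1)t, sin (2k-1)t)`. -/
noncomputable def SM (k : ℕ) (t : ℝ) : EuclideanSpace ℝ (Fin (2 * k)) :=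
  WithLp.toLp 2 fun i => if i.1 % 2 = 0 then Real.cos ((2 * (i.1 / 2) + 1) * t)
           else Real.sin ((2 * (i.1 / 2) + 1) * t)

/-- `B_{2k}`, the convex hull of the symmetric moment curve. -/
noncomputable def B (k : ℕ) : Set (EuclideanSpace ℝ (Fin (2 * k))) :=
  convexHull ℝ (Set.range (SM k))

/-- The length of the shorter arc between the points of `S¹ = ℝ/2πℤ`
represented by `s` and `t`. -/
noncomputable def arcDist (s t : ℝ) : ℝ :=
  dist (s : AddCircle (2 * π)) (t : AddCircle (2 * π))

/-- The raked trigonometric polynomial of degree `2k-1` with constant term `c`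
and coefficients `a j`, `b j` on `sin (2j-1)t`, `cos (2j-1)t`. -/
noncomputable def rakedTrig (k : ℕ) (c : ℝ) (a b : Fin k → ℝ) (t : ℝ) : ℝ :=
  c + (∑ j : Fin k, a j * Real.sin ((2 * (j : ℕ) + 1) * t))
    + (∑ j : Fin k, b j * Real.cos ((2 * (j : ℕ) + 1) * t))

/-- The derivative of a raked trigonometric polynomial. -/
noncomputable def rakedDeriv (k : ℕ) (a b : Fin k → ℝ) (t : ℝ) : ℝ :=
  (∑ j : Fin k, a j * (Real.cos ((2 * (j : ℕ) + 1) * t) * (2 * (j : ℕ) + 1)))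
    + (∑ j : Fin k, b j * (-Real.sin ((2 * (j : ℕ) + 1) * t) * (2 * (j : ℕ) + 1)))

theorem rakedTrig_hasDerivAt (k : ℕ) (c : ℝ) (a b : Fin k → ℝ) (t : ℝ) :
    HasDerivAt (rakedTrig k c a b) (rakedDeriv k a b t) t := by
  unfold rakedDeriv
  have hl : ∀ j : Fin k, HasDerivAt (fun t : ℝ => (2 * ((j : ℕ) : ℝ) + 1) * t)
      (2 * ((j : ℕ) : ℝ) + 1) t := fun j => by
    simpa using (hasDerivAt_id t).const_mul (2 * ((j : ℕ) : ℝ) + 1)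
  have h1 := HasDerivAt.fun_sum (u := Finset.univ) (fun (j : Fin k) _ => ((hl j).sin).const_mul (a j))
  have h2 := HasDerivAt.fun_sum (u := Finset.univ) (fun (j : Fin k) _ => ((hl j).cos).const_mul (b j))
  exact (h1.const_add c).add h2

/-- The complex polynomial attached to the derivative. -/
noncomputable def rakedPoly (k : ℕ) (a b : Fin k → ℝ) : Polynomial ℂ :=
  ∑ j : Fin k, (Polynomial.monomial (k + j) (((a j : ℂ) + Complex.I * b j) * (2 * (j : ℕ) + 1) / 2)
    + Polynomial.monomial (k - 1 - j) (((a j : ℂ) - Complex.I * b j) * (2 * (j : ℕ) + 1) / 2))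

theorem rakedPoly_degree (k : ℕ) (a b : Fin k → ℝ) :
    (rakedPoly k a b).degree < (2 * k : ℕ) := by
  rw [← Polynomial.mem_degreeLT]
  refine Submodule.sum_mem _ fun j _ => Submodule.add_mem _ ?_ ?_
  all_goals
    rw [Polynomial.mem_degreeLT]
    refine (Polynomial.degree_monomial_le _ _).trans_lt ?_
    have := j.2
    exact_mod_cast (by omega)

theorem rakedPoly_eval (k : ℕ) (a b : Fin k → ℝ) (t : ℝ) :
    (rakedPoly k a b).eval (Complex.exp (2 * t * Complex.I)) =
      Complex.exp ((2 * k - 1) * t * Complex.I) * (rakedDeriv k a b t : ℝ) := by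
  unfold rakedPoly rakedDeriv
  rw [Polynomial.eval_finset_sum, ← Finset.sum_add_distrib]
  push_cast
  rw [Finset.mul_sum]
  refine Finset.sum_congr rfl fun j _ => ?_
  simp only [Polynomial.eval_add, Polynomial.eval_monomial, ← Complex.exp_nat_mul]
  have hj : ((k - 1 - (j : ℕ) : ℕ) : ℂ) = k - 1 - (j : ℕ) := by
    have := j.2
    rw [Nat.cast_sub (by omega), Nat.cast_sub (by omega)]; simp
  rw [hj]
  have e1 : Complex.exp (((k + (j : ℕ) : ℕ) : ℂ) * (2 * t * Complex.I)) =
      Complex.exp ((2 * k - 1) * t * Complex.I) *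
        Complex.exp (((2 * (j : ℕ) + 1) * t : ℂ) * Complex.I) := by
    rw [← Complex.exp_add]; congr 1; push_cast; ring
  have e2 : Complex.exp (((k : ℂ) - 1 - (j : ℕ)) * (2 * t * Complex.I)) =
      Complex.exp ((2 * k - 1) * t * Complex.I) *
        Complex.exp (-((2 * (j : ℕ) + 1) * t : ℂ) * Complex.I) := by
    rw [← Complex.exp_add]; congr 1; ring
  rw [e1, e2, Complex.cos, Complex.sin]
  linear_combination (0 : ℂ) * Complex.I_sq

theorem rakedDeriv_eq_zero (k : ℕ) (a b : Fin k → ℝ) (p q : ℝ) (hpq : q - p < π)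
    (u : Fin (2 * k) → ℝ) (hu : ∀ i, u i ∈ Set.Icc p q) (huinj : Function.Injective u)
    (h0 : ∀ i, rakedDeriv k a b (u i) = 0) (t : ℝ) : rakedDeriv k a b t = 0 := by
  have hinj : Function.Injective fun i => Complex.exp (2 * (u i : ℂ) * Complex.I) := by
    intro i j hij
    obtain ⟨n, hn⟩ := Complex.exp_eq_exp_iff_exists_int.1 hij
    have h2 : (2 * (u i : ℂ)) = 2 * u j + n * (2 * π) := by
      apply mul_right_cancel₀ Complex.I_ne_zero
      rw [hn]; ring
    have h3 : 2 * u i = 2 * u j + n * (2 * π) := by exact_mod_cast h2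
    have hi := hu i
    have hj := hu j
    have hp := Real.pi_pos
    have hn0 : n = 0 := by
      have l1 : (n : ℝ) < 1 := by
        by_contra hc
        push Not at hc
        nlinarith [hi.1, hi.2, hj.1, hj.2]
      have l2 : (-1 : ℝ) < n := by
        by_contra hc
        push Not at hc
        nlinarith [hi.1, hi.2, hj.1, hj.2]
      have l1' : n < 1 := by exact_mod_cast l1
      have l2' : -1 < n := by exact_mod_cast l2
      omega
    apply huinj
    rw [hn0] at h3
    push_cast at h3
    linarith
  have hP : rakedPoly k a b = 0 := by
    by_contra hne
    have hd := rakedPoly_degree k a b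
    refine hne (Polynomial.eq_zero_of_natDegree_lt_card_of_eval_eq_zero _ hinj ?_ ?_)
    · intro i
      rw [rakedPoly_eval, h0]; simp
    · rw [Fintype.card_fin]
      exact (Polynomial.natDegree_lt_iff_degree_lt hne).2 hd
  have he := rakedPoly_eval k a b t
  rw [hP, Polynomial.eval_zero] at he
  have := (mul_eq_zero.1 he.symm).resolve_left (Complex.exp_ne_zero _)
  exact_mod_cast this

theorem rakedTrig_eq_zero (k : ℕ) (c : ℝ) (a b : Fin k → ℝ) (p q : ℝ) (hpq : q - p < π)
    (S : Finset ℝ) (hcard : S.card = 2 * k + 1) (hS : ∀ x ∈ S, x ∈ Set.Icc p q)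
    (h0 : ∀ x ∈ S, rakedTrig k c a b x = 0) (t : ℝ) : rakedTrig k c a b t = 0 := by
  let v := S.orderEmbOfFin hcard
  have hv : ∀ i, v i ∈ S := fun i => S.orderEmbOfFin_mem hcard i
  have hmono : StrictMono v := v.strictMono
  have hrolle : ∀ i : Fin (2 * k), ∃ x ∈ Set.Ioo (v i.castSucc) (v i.succ),
      rakedDeriv k a b x = 0 := fun i =>
    exists_hasDerivAt_eq_zero (hmono i.castSucc_lt_succ)
      (fun x _ => (rakedTrig_hasDerivAt k c a b x).continuousAt.continuousWithinAt)
      (by rw [h0 _ (hv _), h0 _ (hv _)])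
      (fun x _ => rakedTrig_hasDerivAt k c a b x)
  choose u hu hu0 using hrolle
  have humono : StrictMono u := by
    intro i j hij
    have : v i.succ ≤ v j.castSucc := hmono.monotone (by
      rw [Fin.le_def]; simpa using hij)
    exact (hu i).2.trans_le (this.trans (hu j).1.le)
  have hd := rakedDeriv_eq_zero k a b p q hpq u
    (fun i => ⟨(hS _ (hv _)).1.trans (hu i).1.le, (hu i).2.le.trans (hS _ (hv _)).2⟩)
    humono.injective hu0
  have hconst := is_const_of_deriv_eq_zero
    (fun x => (rakedTrig_hasDerivAt k c a b x).differentiableAt)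
    (fun x => by rw [(rakedTrig_hasDerivAt k c a b x).deriv, hd])
  rw [hconst t (v 0), h0 _ (hv _)]

theorem rakedTrig_periodic (k : ℕ) (c : ℝ) (a b : Fin k → ℝ) :
    Function.Periodic (rakedTrig k c a b) (2 * π) := by
  intro t
  unfold rakedTrig
  have h : ∀ j : ℕ, (2 * (j : ℝ) + 1) * (t + 2 * π) =
      (2 * (j : ℝ) + 1) * t + ((2 * j + 1 : ℕ) : ℝ) * (2 * π) := by
    intro j; push_cast; ring
  simp only [h, Real.sin_add_nat_mul_two_pi, Real.cos_add_nat_mul_two_pi]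

/-- Lemma 6.3: if a nonzero raked trigonometric polynomial has `2k` distinct roots in an
arc `Ω` of `S¹` of length less than `π`, then any other root on `S¹` lies in the
antipodal arc `Ω + π`. -/
theorem stmt_15 (k : ℕ) (hk : 0 < k) (c₀ : ℝ) (a b : Fin k → ℝ)
    (hA : ∃ t, rakedTrig k c₀ a b t ≠ 0)
    (c L : ℝ) (hL0 : 0 ≤ L) (hLπ : L < π)
    (t : Fin (2 * k) → ℝ)
    (ht : ∀ i, t i ∈ Set.Icc c (c + L))
    (htinj : Function.Injective fun i => ((t i : ℝ) : AddCircle (2 * π)))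
    (hroots : ∀ i, rakedTrig k c₀ a b (t i) = 0)
    (s : ℝ) (hs : rakedTrig k c₀ a b s = 0)
    (hsout : ¬ ∃ r ∈ Set.Icc c (c + L),
      ((s : AddCircle (2 * π)) = ((r : ℝ) : AddCircle (2 * π)))) :
    ∃ r ∈ Set.Icc c (c + L),
      ((s : AddCircle (2 * π)) = ((r + π : ℝ) : AddCircle (2 * π))) := by
  have hp := Real.pi_pos
  have h2p : (0 : ℝ) < 2 * π := by positivity
  obtain ⟨x0, hx0⟩ := hA
  have htinj' : Function.Injective t := fun i j hij => htinj (by simp only [hij])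
  have key : ∀ p q x : ℝ, q - p < π → p ≤ c → c + L ≤ q → x ∈ Set.Icc p q →
      x ∉ Set.Icc c (c + L) → rakedTrig k c₀ a b x = 0 → False := by
    intro p q x hpq hpc hcq hx hxn hx0'
    apply hx0
    have hnot : x ∉ Finset.univ.image t := by
      intro hm
      obtain ⟨i, -, rfl⟩ := Finset.mem_image.1 hm
      exact hxn (ht i)
    refine rakedTrig_eq_zero k c₀ a b p q hpq (insert x (Finset.univ.image t)) ?_ ?_ ?_ x0
    · rw [Finset.card_insert_of_notMem hnot, Finset.card_image_of_injective _ htinj']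
      simp
    · intro y hy
      rcases Finset.mem_insert.1 hy with rfl | hy
      · exact hx
      · obtain ⟨i, -, rfl⟩ := Finset.mem_image.1 hy
        exact ⟨hpc.trans (ht i).1, (ht i).2.trans hcq⟩
    · intro y hy
      rcases Finset.mem_insert.1 hy with rfl | hy
      · exact hx0'
      · obtain ⟨i, -, rfl⟩ := Finset.mem_image.1 hy
        exact hroots i
  obtain ⟨s', ⟨hs1, hs2⟩, hss, hcoe⟩ : ∃ s' ∈ Set.Ico c (c + 2 * π),
      rakedTrig k c₀ a b s' = 0 ∧ (s : AddCircle (2 * π)) = (s' : AddCircle (2 * π)) := by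
    refine ⟨toIcoMod h2p c s, toIcoMod_mem_Ico h2p c s, ?_, ?_⟩
    · rw [toIcoMod, (rakedTrig_periodic k c₀ a b).sub_zsmul_eq, hs]
    · rw [toIcoMod, AddCircle.coe_sub, AddCircle.coe_zsmul, AddCircle.coe_period]; simp
  have hout : ¬ s' ≤ c + L := fun h => hsout ⟨s', ⟨hs1, h⟩, hcoe⟩
  push Not at hout
  by_cases h1 : s' < c + π
  · exact (key c s' s' (by linarith) le_rfl hout.le ⟨hs1, le_rfl⟩
      (fun h => absurd h.2 (not_le.2 hout)) hss).elim
  push Not at h1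
  by_cases h2 : s' ≤ c + L + π
  · exact ⟨s' - π, ⟨by linarith, by linarith⟩, by rw [hcoe, sub_add_cancel]⟩
  push Not at h2
  exact (key (s' - 2 * π) (c + L) (s' - 2 * π) (by linarith) (by linarith) le_rfl
    ⟨le_rfl, by linarith⟩ (fun h => absurd h.1 (by linarith))
    (by rw [(rakedTrig_periodic k c₀ a b).sub_eq, hss])).elim
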